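/- Let p be a prime, n ≥ 2 an integer, and γ₁, γ₂ ∈ ℤ with p not dividing γ₁ and γ₂ ≠ 0. Then the quadratic polynomial f(x) = p^n + γ₁ x + γ₂ x² has a root in ℤ_p, and f is reducible in ℤ_p[x], i.e., f = g·h for polynomials g, h over ℤ_p neither of which is a unit of ℤ_p[x]. (Note that, in contrast, such f is irreducible in ℤ[[x]].) -/

import Mathlib

/-!
Since `f(0) = p ^ n` lies in `p ℤ_p` while `f'(0) = γ₁` is a unit, Hensel's lemma at `0` yields a
root `ϱ` of `f` in `ℤ_p`. Dividing by `X - ϱ` leaves a cofactor of positive degree, and over a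
domain such a polynomial is not a unit.
-/

open Polynomial

lemma exists_eq_mul_not_isUnit_of_isRoot {R : Type*} [CommRing R] [IsDomain R] {f : R[X]} {r : R}
    (hr : f.IsRoot r) (hf : 1 < f.natDegree) :
    ∃ g h : R[X], f = g * h ∧ ¬ IsUnit g ∧ ¬ IsUnit h := by
  refine ⟨X - C r, f /ₘ (X - C r), (mul_divByMonic_eq_iff_isRoot.2 hr).symm,
    not_isUnit_X_sub_C r, not_isUnit_of_natDegree_pos _ ?_⟩
  rw [natDegree_divByMonic f (monic_X_sub_C r), natDegree_X_sub_C]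
  exact Nat.sub_pos_of_lt hf

lemma aeval_zero_derivative {R A : Type*} [CommSemiring R] [Semiring A] [Algebra R A]
    (f : R[X]) : aeval (0 : A) (derivative f) = algebraMap R A (f.coeff 1) := by
  simp [← coeff_zero_eq_aeval_zero', coeff_derivative]

section PadicInt

variable {p : ℕ} [Fact p.Prime]

lemma norm_intCast_padicInt_eq_one_iff_not_dvd {z : ℤ} :
    ‖(z : ℤ_[p])‖ = 1 ↔ ¬ (p : ℤ) ∣ z := by
  rw [← PadicInt.norm_intCast_lt_one_iff (p := p), not_lt]
  exact (PadicInt.norm_le_one (z : ℤ_[p])).ge_iff_eq.symm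

lemma norm_aeval_zero_lt_of_dvd_coeff_zero {f : ℤ[X]} (h₀ : (p : ℤ) ∣ f.coeff 0)
    (h₁ : ¬ (p : ℤ) ∣ f.coeff 1) :
    ‖aeval (0 : ℤ_[p]) f‖ < ‖aeval (0 : ℤ_[p]) (derivative f)‖ ^ 2 := by
  rw [← coeff_zero_eq_aeval_zero', aeval_zero_derivative, algebraMap_int_eq, eq_intCast,
    eq_intCast, norm_intCast_padicInt_eq_one_iff_not_dvd.2 h₁, one_pow]
  exact PadicInt.norm_intCast_lt_one_iff.2 h₀

theorem quadratic_reducible_in_padic_general {R : Type*} [CommSemiring R] [Algebra R ℤ_[p]]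
    {f : R[X]} {a : ℤ_[p]} (ha : ‖aeval a f‖ < ‖aeval a (derivative f)‖ ^ 2)
    (hf : 1 < (f.map (algebraMap R ℤ_[p])).natDegree) :
    (∃ ϱ : ℤ_[p], aeval ϱ f = 0) ∧
      ∃ g h : ℤ_[p][X], f.map (algebraMap R ℤ_[p]) = g * h ∧ ¬ IsUnit g ∧ ¬ IsUnit h := by
  obtain ⟨ϱ, hϱ, -⟩ := hensels_lemma ha
  have hroot : (f.map (algebraMap R ℤ_[p])).IsRoot ϱ := by
    rwa [IsRoot, eval_map_algebraMap]
  exact ⟨⟨ϱ, hϱ⟩, exists_eq_mul_not_isUnit_of_isRoot hroot hf⟩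

end PadicInt

/-- Let `p` be a prime, `n ≥ 2`, `p ∤ γ₁`, and `γ₂ ≠ 0`.  Then `f = p^n + γ₁ x + γ₂ x²` has a
root in `ℤ_p` and is reducible in `ℤ_p[x]`. -/
theorem quadratic_reducible_in_padic (p : ℕ) [hp : Fact p.Prime]
    (n : ℕ) (hn : 2 ≤ n) (γ₁ γ₂ : ℤ) (hγ₁ : ¬ (p : ℤ) ∣ γ₁) (hγ₂ : γ₂ ≠ 0)
    (f : Polynomial ℤ)
    (hf : f = C ((p : ℤ) ^ n) + C γ₁ * X + C γ₂ * X ^ 2) :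
    (∃ ϱ : ℤ_[p], Polynomial.aeval ϱ f = 0) ∧
      ∃ g h : Polynomial ℤ_[p],
        f.map (Int.castRingHom ℤ_[p]) = g * h ∧ ¬ IsUnit g ∧ ¬ IsUnit h := by
  have hcoeff₀ : f.coeff 0 = (p : ℤ) ^ n := by
    rw [coeff_zero_eq_eval_zero, hf]
    simp
  have hcoeff₁ : f.coeff 1 = γ₁ := by
    simp only [hf, coeff_add, coeff_C_succ, coeff_C_mul, coeff_X_one, coeff_X_pow,
      OfNat.one_ne_ofNat, if_false, mul_one, mul_zero, zero_add, add_zero]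
  have hdeg : 1 < (f.map (Int.castRingHom ℤ_[p])).natDegree := by
    have hquad : f = C γ₂ * X ^ 2 + C γ₁ * X + C ((p : ℤ) ^ n) := by rw [hf]; ring
    rw [natDegree_map_eq_of_injective Int.cast_injective, hquad, natDegree_quadratic hγ₂]
    exact one_lt_two
  have hnorm : ‖aeval (0 : ℤ_[p]) f‖ < ‖aeval (0 : ℤ_[p]) (derivative f)‖ ^ 2 :=
    norm_aeval_zero_lt_of_dvd_coeff_zero (hcoeff₀ ▸ dvd_pow_self _ (by lia)) (hcoeff₁ ▸ hγ₁)
  exact quadratic_reducible_in_padic_general hnorm hdeg
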